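/- Let k ≥ 2, let N be a k-k-XOR-BN on n nodes, let U be a control node set for N, and let t* be the minimum positive integer such that for every initial state x^0 and every target state x^T there exist control signals driving N from x(0)=x^0 to x(t*)=x^T in exactly t* steps. Then n/t* ≤ |U| ≤ n − t* + 1. -/

import Mathlib

namespace BN

variable {n : ℕ}

/-- The Boolean function `f` depends on input `j`. -/
def Depends (f : (Fin n → Bool) → Bool) (j : Fin n) : Prop :=
  ∃ x : Fin n → Bool, f (Function.update x j (!(x j))) ≠ f x

/-- The set of incoming nodes of node `i` (Γ⁻). -/
def inSet (F : Fin n → (Fin n → Bool) → Bool) (i : Fin n) : Set (Fin n) :=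
  {j | Depends (F i) j}

/-- The set of outgoing nodes of node `i` (Γ⁺). -/
def outSet (F : Fin n → (Fin n → Bool) → Bool) (i : Fin n) : Set (Fin n) :=
  {j | Depends (F j) i}

/-- The controlled trajectory: nodes in `U` get an xor-control signal. -/
def traj (F : Fin n → (Fin n → Bool) → Bool) (U : Finset (Fin n))
    (u : ℕ → Fin n → Bool) (x0 : Fin n → Bool) : ℕ → Fin n → Bool
  | 0 => x0
  | t + 1 => fun i =>
      if i ∈ U then Bool.xor (u t i) (F i (traj F U u x0 t))
      else F i (traj F U u x0 t)

/-- `U` is a control node set: any initial state can be driven to any target state. -/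
def IsControlSet (F : Fin n → (Fin n → Bool) → Bool) (U : Finset (Fin n)) : Prop :=
  ∀ x0 xT : Fin n → Bool, ∃ t : ℕ, 1 ≤ t ∧ ∃ u : ℕ → Fin n → Bool, traj F U u x0 t = xT

/-- XOR (parity) of the inputs in `S`. -/
def xorFun (S : Finset (Fin n)) (x : Fin n → Bool) : Bool :=
  decide ((S.filter (fun j => x j = true)).card % 2 = 1)

/-- `f` is the XOR of `k` distinct inputs, or its negation. -/
def IsKXor (k : ℕ) (f : (Fin n → Bool) → Bool) : Prop :=
  ∃ S : Finset (Fin n), S.card = k ∧ (f = xorFun S ∨ f = fun x => !(xorFun S x))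

/-- A `k`-`k`-XOR-BN: each function is a `k`-input XOR (or negation) and
every node has indegree `k` and outdegree `k`. -/
def IsKKXorBN (k : ℕ) (F : Fin n → (Fin n → Bool) → Bool) : Prop :=
  (∀ i, IsKXor k (F i)) ∧ ∀ i, (inSet F i).ncard = k ∧ (outSet F i).ncard = k

/-- All pairs of states are connected in exactly `t` steps under controls on `U`. -/
def ReachIn (F : Fin n → (Fin n → Bool) → Bool) (U : Finset (Fin n)) (t : ℕ) : Prop :=
  ∀ x0 xT : Fin n → Bool, ∃ u : ℕ → Fin n → Bool, traj F U u x0 t = xT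

/-!
Over the two-element field an XOR network is an affine map `x ↦ A x + c`, and the controls add an
arbitrary vector supported on `U` at every step. Hence the states reachable from `x⁰` in `t` steps
form a translate of `C t = B + A B + ⋯ + A ^ (t - 1) B`, where `B` is the space of vectors supported
on `U`, and `t*` is the first positive `t` at which `C t` is the whole space. Each step adds at most
`|U|` dimensions, so `n ≤ t* |U|`. The chain `C t` is constant from the first repetition on, so each
step between `C 1 = B` and `C t*` adds at least one dimension, so `|U| + (t* - 1) ≤ n`.
-/

section Controllable

variable {R M : Type*} [Semiring R] [AddCommMonoid M] [Module R M]

/-- The controllable subspace `B + A B + ⋯ + A ^ (t - 1) B` of the linear control system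
`x ↦ A x + b`, `b ∈ B`: the states it can reach from `0` in `t` steps. It is built by iteration
rather than as a sum so that monotonicity and stabilisation in `t` are facts about iterates. -/
def controllable (A : M →ₗ[R] M) (B : Submodule R M) (t : ℕ) : Submodule R M :=
  (fun W ↦ W.map A ⊔ B)^[t] ⊥

variable (A : M →ₗ[R] M) (B : Submodule R M)

lemma controllable_zero : controllable A B 0 = ⊥ := rfl

lemma controllable_succ (t : ℕ) :
    controllable A B (t + 1) = (controllable A B t).map A ⊔ B :=
  Function.iterate_succ_apply' _ _ _

lemma controllable_one : controllable A B 1 = B := by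
  rw [controllable_succ, controllable_zero, Submodule.map_bot, bot_sup_eq]

lemma controllable_mono : Monotone (controllable A B) :=
  Monotone.monotone_iterate_of_le_map
    (fun _ _ h ↦ sup_le_sup_right (Submodule.map_mono h) B) bot_le

variable {A B}

lemma controllable_add_of_succ_eq {t : ℕ} (h : controllable A B (t + 1) = controllable A B t)
    (m : ℕ) : controllable A B (m + t) = controllable A B t := by
  have hfix : (controllable A B t).map A ⊔ B = controllable A B t := by
    rw [← controllable_succ, h]
  rw [controllable, Function.iterate_add_apply]
  exact Function.iterate_fixed hfix m

lemma controllable_lt_succ {s T : ℕ} (hT : controllable A B T = ⊤)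
    (hs : controllable A B s ≠ ⊤) : controllable A B s < controllable A B (s + 1) := by
  refine (controllable_mono A B s.le_succ).lt_of_ne fun h ↦ hs ?_
  rw [eq_top_iff, ← hT, ← controllable_add_of_succ_eq h.symm T]
  exact controllable_mono A B (T.le_add_right s)

end Controllable

section Dimension

open Module

variable {K V : Type*} [DivisionRing K] [AddCommGroup V] [Module K V] [FiniteDimensional K V]

lemma finrank_controllable_le (A : V →ₗ[K] V) (B : Submodule K V) (t : ℕ) :
    finrank K (controllable A B t) ≤ t * finrank K B := by
  induction t with
  | zero => rw [controllable_zero, finrank_bot, zero_mul]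
  | succ t ih =>
    calc finrank K (controllable A B (t + 1))
        = finrank K ↥((controllable A B t).map A ⊔ B) := by rw [controllable_succ]
      _ ≤ finrank K ((controllable A B t).map A) + finrank K B :=
          Submodule.finrank_add_le_finrank_add_finrank _ _
      _ ≤ t * finrank K B + finrank K B := by
          gcongr
          exact (Submodule.finrank_map_le A _).trans ih
      _ = (t + 1) * finrank K B := (Nat.succ_mul _ _).symm

variable {A : V →ₗ[K] V} {B : Submodule K V} {T : ℕ}

lemma finrank_add_le_finrank_controllable_succ (hT : controllable A B T = ⊤) {s : ℕ}
    (hs : controllable A B (s + 1) ≠ ⊤) :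
    finrank K B + s ≤ finrank K (controllable A B (s + 1)) := by
  induction s with
  | zero => rw [controllable_one, add_zero]
  | succ s ih =>
    have hs' : controllable A B (s + 1) ≠ ⊤ := fun h ↦
      hs (top_le_iff.1 (h ▸ controllable_mono A B (s + 1).le_succ))
    exact (ih hs').trans_lt (Submodule.finrank_lt_finrank_of_lt (controllable_lt_succ hT hs'))

theorem finrank_le_mul_of_controllable_eq_top (hT : controllable A B T = ⊤) :
    finrank K V ≤ T * finrank K B := by
  rw [← finrank_top K V, ← hT]
  exact finrank_controllable_le A B T

theorem finrank_add_le_of_isLeast (hT : IsLeast {t | 1 ≤ t ∧ controllable A B t = ⊤} T) :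
    finrank K B + T ≤ finrank K V + 1 := by
  obtain ⟨⟨hpos, htop⟩, hleast⟩ := hT
  obtain _ | _ | s := T
  · contradiction
  · simpa using Submodule.finrank_le B
  · have hs : controllable A B (s + 1) ≠ ⊤ := fun h ↦
      (hleast ⟨s.succ_pos, h⟩).not_gt (s + 1).lt_succ_self
    have hgrow := finrank_add_le_finrank_controllable_succ htop hs
    have hproper := Submodule.finrank_lt hs
    lia

end Dimension

section SupportedOn

variable {K ι : Type*} [Semiring K]

variable (K) in
/-- The vectors whose coordinates outside `s` vanish; for `s = U` these are the control inputs. -/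
def supportedOn (s : Set ι) : Submodule K (ι → K) :=
  ⨅ i ∈ sᶜ, LinearMap.ker (LinearMap.proj i)

lemma mem_supportedOn {s : Set ι} {v : ι → K} : v ∈ supportedOn K s ↔ ∀ i ∉ s, v i = 0 := by
  simp [supportedOn]

lemma mem_supportedOn_iff_exists_indicator {s : Set ι} {v : ι → K} :
    v ∈ supportedOn K s ↔ ∃ w, s.indicator w = v := by
  refine ⟨fun h ↦ ⟨v, Set.indicator_eq_self.2 fun i hi ↦ ?_⟩, ?_⟩
  · exact of_not_not fun his ↦ hi (mem_supportedOn.1 h i his)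
  · rintro ⟨w, rfl⟩
    exact mem_supportedOn.2 fun i hi ↦ Set.indicator_of_notMem hi w

lemma finrank_supportedOn [StrongRankCondition K] (s : Finset ι) :
    Module.finrank K (supportedOn K (s : Set ι)) = s.card := by
  classical
  have e : supportedOn K (s : Set ι) ≃ₗ[K] (s → K) :=
    LinearMap.iInfKerProjEquiv K (fun _ ↦ K) disjoint_compl_right (Set.union_compl_self _).ge
  rw [e.finrank_eq, Module.finrank_fintype_fun_eq_card, Fintype.card_coe]

end SupportedOn

/-- The two-element field, on Mathlib's Boolean ring structure on `Bool`: addition is `xor` and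
multiplication is `and`, so that the states of a network are vectors. -/
instance instFieldBool : Field Bool where
  inv := id
  exists_pair_ne := ⟨false, true, Bool.false_ne_true⟩
  mul_inv_cancel := by decide
  inv_zero := rfl
  nnqsmul := _
  nnqsmul_def _ _ := rfl
  qsmul := _
  qsmul_def _ _ := rfl

lemma add_one_eq_not (b : Bool) : b + 1 = !b := Bool.xor_true b

lemma natCast_eq_decide (m : ℕ) : (m : Bool) = decide (m % 2 = 1) := by
  induction m with
  | zero => rfl
  | succ m ih =>
    rw [Nat.cast_succ, ih, add_one_eq_not, ← decide_not, decide_eq_decide]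
    lia

lemma xorFun_eq_sum (S : Finset (Fin n)) (x : Fin n → Bool) : xorFun S x = ∑ j ∈ S, x j :=
  calc xorFun S x = ((S.filter (x · = true)).card : Bool) := (natCast_eq_decide _).symm
    _ = ∑ j ∈ S, if x j = true then 1 else 0 := (Finset.sum_boole _ _).symm
    _ = ∑ j ∈ S, x j := Finset.sum_congr rfl fun j _ ↦ by cases x j <;> rfl

lemma IsKXor.exists_affine {k : ℕ} {f : (Fin n → Bool) → Bool} (hf : IsKXor k f) :
    ∃ (a : (Fin n → Bool) →ₗ[Bool] Bool) (c : Bool), ∀ x, f x = a x + c := by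
  obtain ⟨S, -, rfl | rfl⟩ := hf
  · exact ⟨∑ j ∈ S, LinearMap.proj j, 0, fun x ↦ by simp [xorFun_eq_sum]⟩
  · exact ⟨∑ j ∈ S, LinearMap.proj j, 1, fun x ↦ by simp [xorFun_eq_sum, add_one_eq_not]⟩

lemma exists_affine_of_isKXor {F : Fin n → (Fin n → Bool) → Bool}
    (hF : ∀ i, ∃ k, IsKXor k (F i)) :
    ∃ (A : (Fin n → Bool) →ₗ[Bool] (Fin n → Bool)) (c : Fin n → Bool),
      ∀ x, (F · x) = A x + c := by
  choose k hk using hF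
  choose a c h using fun i ↦ (hk i).exists_affine
  exact ⟨LinearMap.pi a, c, fun x ↦ funext fun i ↦ h i x⟩

section Reachability

lemma traj_succ (F : Fin n → (Fin n → Bool) → Bool) (U : Finset (Fin n))
    (u : ℕ → Fin n → Bool) (x₀ : Fin n → Bool) (t : ℕ) :
    traj F U u x₀ (t + 1) = (U : Set (Fin n)).indicator (u t) + (F · (traj F U u x₀ t)) := by
  ext i
  by_cases hi : i ∈ U
  · simp only [traj, if_pos hi, Pi.add_apply, Set.indicator_of_mem (Finset.mem_coe.2 hi)]
    rfl
  · simp [traj, hi]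

lemma traj_congr (F : Fin n → (Fin n → Bool) → Bool) (U : Finset (Fin n))
    {u v : ℕ → Fin n → Bool} (x₀ : Fin n → Bool) {t : ℕ} (h : ∀ s < t, u s = v s) :
    traj F U u x₀ t = traj F U v x₀ t := by
  induction t with
  | zero => rfl
  | succ t ih =>
    rw [traj_succ, traj_succ, ih fun s hs ↦ h s (hs.trans t.lt_succ_self), h t t.lt_succ_self]

/-- The set of states to which controls on `U` can drive `x₀` in exactly `t` steps. -/
def reachSet (F : Fin n → (Fin n → Bool) → Bool) (U : Finset (Fin n)) (x₀ : Fin n → Bool)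
    (t : ℕ) : Set (Fin n → Bool) :=
  Set.range fun u ↦ traj F U u x₀ t

variable {F : Fin n → (Fin n → Bool) → Bool}

lemma mem_reachSet_zero {U : Finset (Fin n)} {x₀ y : Fin n → Bool} :
    y ∈ reachSet F U x₀ 0 ↔ y = x₀ := by
  simp [reachSet, traj, eq_comm]

lemma mem_reachSet_succ {U : Finset (Fin n)} {x₀ y : Fin n → Bool} {t : ℕ} :
    y ∈ reachSet F U x₀ (t + 1) ↔
      ∃ x ∈ reachSet F U x₀ t, y - (F · x) ∈ supportedOn Bool (U : Set (Fin n)) := by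
  constructor
  · rintro ⟨u, rfl⟩
    refine ⟨_, ⟨u, rfl⟩, mem_supportedOn_iff_exists_indicator.2 ⟨u t, ?_⟩⟩
    exact eq_sub_of_add_eq (traj_succ F U u x₀ t).symm
  · rintro ⟨_, ⟨u, rfl⟩, hy⟩
    obtain ⟨w, hw⟩ := mem_supportedOn_iff_exists_indicator.1 hy
    have hpast : traj F U (Function.update u t w) x₀ t = traj F U u x₀ t :=
      traj_congr F U x₀ fun s hs ↦ Function.update_of_ne hs.ne _ _
    refine ⟨Function.update u t w, ?_⟩
    simp only [traj_succ, hpast, Function.update_self, hw, sub_add_cancel]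

variable {A : (Fin n → Bool) →ₗ[Bool] (Fin n → Bool)} {c : Fin n → Bool}

theorem mem_reachSet_iff (hA : ∀ x, (F · x) = A x + c) {U : Finset (Fin n)}
    {x₀ y : Fin n → Bool} {t : ℕ} :
    y ∈ reachSet F U x₀ t ↔ y - traj F U 0 x₀ t ∈ controllable A (supportedOn Bool U) t := by
  induction t generalizing y with
  | zero => rw [mem_reachSet_zero, controllable_zero, Submodule.mem_bot, sub_eq_zero, traj]
  | succ t ih =>
    have hfree : traj F U 0 x₀ (t + 1) = A (traj F U 0 x₀ t) + c := by
      rw [traj_succ, hA, Pi.zero_apply, Set.indicator_zero', zero_add]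
    rw [mem_reachSet_succ, controllable_succ, Submodule.mem_sup]
    constructor
    · rintro ⟨x, hx, hy⟩
      refine ⟨_, Submodule.mem_map_of_mem (ih.1 hx), _, hy, ?_⟩
      rw [hfree, hA, map_sub]
      abel
    · rintro ⟨_, ⟨w, hw, rfl⟩, b, hb, hsum⟩
      refine ⟨w + traj F U 0 x₀ t, ih.2 (by rwa [add_sub_cancel_right]), ?_⟩
      have hy : y - (A (w + traj F U 0 x₀ t) + c) = b := by
        rw [eq_comm, ← sub_eq_zero, ← sub_eq_zero.2 hsum, hfree, map_add]
        abel
      rwa [hA, hy]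

theorem reachIn_iff_controllable_eq_top (hA : ∀ x, (F · x) = A x + c) {U : Finset (Fin n)}
    {t : ℕ} : ReachIn F U t ↔ controllable A (supportedOn Bool U) t = ⊤ := by
  constructor
  · refine fun h ↦ Submodule.eq_top_iff'.2 fun v ↦ ?_
    have hv : v + traj F U 0 0 t ∈ reachSet F U 0 t := h 0 _
    simpa only [add_sub_cancel_right] using (mem_reachSet_iff hA).1 hv
  · exact fun h x₀ y ↦ (mem_reachSet_iff hA).2 (h ▸ Submodule.mem_top)

end Reachability

theorem stmt6_general {F : Fin n → (Fin n → Bool) → Bool} (hF : ∀ i, ∃ k, IsKXor k (F i))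
    {U : Finset (Fin n)} {T : ℕ} (hT : IsLeast {t | 1 ≤ t ∧ ReachIn F U t} T) :
    (n : ℚ) / T ≤ U.card ∧ (U.card : ℚ) ≤ (n : ℚ) - T + 1 := by
  obtain ⟨A, c, hA⟩ := exists_affine_of_isKXor hF
  simp only [reachIn_iff_controllable_eq_top hA] at hT
  have hlower := finrank_le_mul_of_controllable_eq_top hT.1.2
  have hupper := finrank_add_le_of_isLeast hT
  rw [finrank_supportedOn, Module.finrank_fin_fun] at hlower hupper
  have hT_pos : (0 : ℚ) < T := by exact_mod_cast hT.1.1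
  constructor
  · rw [div_le_iff₀' hT_pos]
    exact_mod_cast hlower
  · rw [sub_add_eq_add_sub, le_sub_iff_add_le]
    exact_mod_cast hupper

/-- For a `k`-`k`-XOR-BN (`k ≥ 2`) with control node set `U`, if `t*` is the
minimum positive time in which every state can be driven to every state, then
`n / t* ≤ |U| ≤ n − t* + 1`. -/
theorem stmt6 (n k : ℕ) (hk : 2 ≤ k)
    (F : Fin n → (Fin n → Bool) → Bool) (hF : IsKKXorBN k F)
    (U : Finset (Fin n)) (hU : IsControlSet F U)
    (tstar : ℕ) (h1 : 1 ≤ tstar) (hreach : ReachIn F U tstar)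
    (hmin : ∀ t : ℕ, 1 ≤ t → ReachIn F U t → tstar ≤ t) :
    (n : ℚ) / tstar ≤ U.card ∧ (U.card : ℚ) ≤ (n : ℚ) - tstar + 1 := by
  exact stmt6_general (fun i ↦ ⟨k, hF.1 i⟩) ⟨⟨h1, hreach⟩, fun t ht ↦ hmin t ht.1 ht.2⟩

end BN
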